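/- Let ℰ be an exact structure on an abelian category 𝒜 such that 𝒜 has enough ℰ-projectives and enough ℰ-injectives, and let (𝒳,𝒴) be a pair of classes of objects of 𝒜 closed under isomorphisms and direct summands. Suppose 𝒳 is ℰ-resolving, 𝒴 = 𝒳^⊥, and every object A of 𝒜 admits an epimorphic 𝒳-precover p : X → A with Ker p ∈ 𝒴. Then 𝒴 is ℰ-coresolving, 𝒳 = ^⊥𝒴, and every object A of 𝒜 admits a monomorphic 𝒴-preenvelope j : A → Y with Coker j ∈ 𝒳. -/

import Mathlib

open CategoryTheory Category Limits

universe v u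

namespace ExactPaper

variable {𝒜 : Type u} [Category.{v} 𝒜] [Abelian 𝒜]

/-- A morphism is an admissible monic w.r.t. a class `c` of short complexes if it occurs
as the first map of a member of `c`. -/
def AdmMono (c : ShortComplex 𝒜 → Prop) {X Y : 𝒜} (f : X ⟶ Y) : Prop :=
  ∃ (Z : 𝒜) (g : Y ⟶ Z) (w : f ≫ g = 0), c (ShortComplex.mk f g w)

/-- A morphism is an admissible epic w.r.t. a class `c` of short complexes if it occurs
as the second map of a member of `c`. -/
def AdmEpi (c : ShortComplex 𝒜 → Prop) {Y Z : 𝒜} (g : Y ⟶ Z) : Prop :=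
  ∃ (X : 𝒜) (f : X ⟶ Y) (w : f ≫ g = 0), c (ShortComplex.mk f g w)

/-- A (Quillen) exact structure on an abelian category `𝒜`: a class of short exact
sequences, called conflations, closed under isomorphisms, containing all split short
exact sequences, such that admissible monics and epics are closed under composition,
pushouts of admissible monics along arbitrary morphisms are admissible monics and
pullbacks of admissible epics along arbitrary morphisms are admissible epics. -/
structure ExactStructure (𝒜 : Type u) [Category.{v} 𝒜] [Abelian 𝒜] where
  conflation : ShortComplex 𝒜 → Prop
  shortExact_of_conflation : ∀ (S : ShortComplex 𝒜), conflation S → S.ShortExact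
  conflation_of_iso : ∀ (S T : ShortComplex 𝒜), (S ≅ T) → conflation S → conflation T
  conflation_of_splitting : ∀ (S : ShortComplex 𝒜), S.Splitting → conflation S
  admMono_comp : ∀ {X Y Z : 𝒜} (f : X ⟶ Y) (g : Y ⟶ Z),
    AdmMono conflation f → AdmMono conflation g → AdmMono conflation (f ≫ g)
  admEpi_comp : ∀ {X Y Z : 𝒜} (f : X ⟶ Y) (g : Y ⟶ Z),
    AdmEpi conflation f → AdmEpi conflation g → AdmEpi conflation (f ≫ g)
  admMono_pushout : ∀ {L M M' : 𝒜} (i : L ⟶ M) (f : L ⟶ M'),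
    AdmMono conflation i → AdmMono conflation (pushout.inr i f)
  admEpi_pullback : ∀ {M N M' : 𝒜} (p : M ⟶ N) (g : M' ⟶ N),
    AdmEpi conflation p → AdmEpi conflation (pullback.snd p g)

namespace ExactStructure

variable (E : ExactStructure 𝒜)

/-- An `ℰ`-projective object. -/
def EProjective (P : 𝒜) : Prop :=
  ∀ (S : ShortComplex 𝒜), E.conflation S → ∀ h : P ⟶ S.X₃, ∃ k : P ⟶ S.X₂, k ≫ S.g = h

/-- An `ℰ`-injective object. -/
def EInjective (I : 𝒜) : Prop :=
  ∀ (S : ShortComplex 𝒜), E.conflation S → ∀ h : S.X₁ ⟶ I, ∃ k : S.X₂ ⟶ I, S.f ≫ k = h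

/-- `𝒜` has enough `ℰ`-projectives. -/
def EnoughProjectives : Prop :=
  ∀ M : 𝒜, ∃ (K P : 𝒜) (i : K ⟶ P) (p : P ⟶ M) (w : i ≫ p = 0),
    E.conflation (ShortComplex.mk i p w) ∧ E.EProjective P

/-- `𝒜` has enough `ℰ`-injectives. -/
def EnoughInjectives : Prop :=
  ∀ M : 𝒜, ∃ (I C : 𝒜) (i : M ⟶ I) (p : I ⟶ C) (w : i ≫ p = 0),
    E.conflation (ShortComplex.mk i p w) ∧ E.EInjective I

/-- `Ext¹_ℰ(M,N) = 0`: every conflation `0 → N → Z → M → 0` splits. -/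
def Ext1Zero (M N : 𝒜) : Prop :=
  ∀ (Z : 𝒜) (i : N ⟶ Z) (p : Z ⟶ M) (w : i ≫ p = 0),
    E.conflation (ShortComplex.mk i p w) → ∃ r : Z ⟶ N, i ≫ r = 𝟙 N

/-- The right `ℰ`-orthogonal class `𝒳^⊥`. -/
def rightPerp (𝒳 : Set 𝒜) : Set 𝒜 := {N | ∀ X ∈ 𝒳, E.Ext1Zero X N}

/-- The left `ℰ`-orthogonal class `^⊥𝒴`. -/
def leftPerp (𝒴 : Set 𝒜) : Set 𝒜 := {M | ∀ Y ∈ 𝒴, E.Ext1Zero M Y}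

/-- A class is closed under `ℰ`-extensions. -/
def ClosedUnderExtensions (𝒯 : Set 𝒜) : Prop :=
  ∀ S : ShortComplex 𝒜, E.conflation S → S.X₁ ∈ 𝒯 → S.X₃ ∈ 𝒯 → S.X₂ ∈ 𝒯

/-- An `ℰ`-resolving class. -/
def Resolving (𝒯 : Set 𝒜) : Prop :=
  (∀ P : 𝒜, E.EProjective P → P ∈ 𝒯) ∧ E.ClosedUnderExtensions 𝒯 ∧
    ∀ S : ShortComplex 𝒜, E.conflation S → S.X₂ ∈ 𝒯 → S.X₃ ∈ 𝒯 → S.X₁ ∈ 𝒯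

/-- An `ℰ`-coresolving class. -/
def Coresolving (𝒯 : Set 𝒜) : Prop :=
  (∀ I : 𝒜, E.EInjective I → I ∈ 𝒯) ∧ E.ClosedUnderExtensions 𝒯 ∧
    ∀ S : ShortComplex 𝒜, E.conflation S → S.X₁ ∈ 𝒯 → S.X₂ ∈ 𝒯 → S.X₃ ∈ 𝒯

/-- `(𝒳,𝒴)` is a complete hereditary `ℰ`-cotorsion pair. -/
def CompleteHereditaryCotorsionPair (𝒳 𝒴 : Set 𝒜) : Prop :=
  𝒳 = E.leftPerp 𝒴 ∧ 𝒴 = E.rightPerp 𝒳 ∧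
  (∀ A : 𝒜, ∃ (Y X : 𝒜) (i : Y ⟶ X) (p : X ⟶ A) (w : i ≫ p = 0),
      E.conflation (ShortComplex.mk i p w) ∧ X ∈ 𝒳 ∧ Y ∈ 𝒴) ∧
  (∀ A : 𝒜, ∃ (Y' X' : 𝒜) (i : A ⟶ Y') (p : Y' ⟶ X') (w : i ≫ p = 0),
      E.conflation (ShortComplex.mk i p w) ∧ X' ∈ 𝒳 ∧ Y' ∈ 𝒴) ∧
  E.Resolving 𝒳

end ExactStructure

/-- `f : X ⟶ A` is an `𝒳`-precover of `A`. -/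
def IsPrecover (𝒳 : Set 𝒜) {X A : 𝒜} (f : X ⟶ A) : Prop :=
  X ∈ 𝒳 ∧ ∀ X' : 𝒜, X' ∈ 𝒳 → ∀ g : X' ⟶ A, ∃ h : X' ⟶ X, h ≫ f = g

/-- `f : X ⟶ A` is an `𝒳`-cover of `A`. -/
def IsCover (𝒳 : Set 𝒜) {X A : 𝒜} (f : X ⟶ A) : Prop :=
  IsPrecover 𝒳 f ∧ ∀ h : X ⟶ X, h ≫ f = f → IsIso h

/-- `f : A ⟶ Y` is a `𝒴`-preenvelope of `A`. -/
def IsPreenvelope (𝒴 : Set 𝒜) {A Y : 𝒜} (f : A ⟶ Y) : Prop :=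
  Y ∈ 𝒴 ∧ ∀ Y' : 𝒜, Y' ∈ 𝒴 → ∀ g : A ⟶ Y', ∃ h : Y ⟶ Y', f ≫ h = g

/-- `f : A ⟶ Y` is a `𝒴`-envelope of `A`. -/
def IsEnvelope (𝒴 : Set 𝒜) {A Y : 𝒜} (f : A ⟶ Y) : Prop :=
  IsPreenvelope 𝒴 f ∧ ∀ h : Y ⟶ Y, f ≫ h = f → IsIso h

/-- A class of objects closed under isomorphisms. -/
def ClosedUnderIsos (𝒳 : Set 𝒜) : Prop := ∀ X Y : 𝒜, (X ≅ Y) → X ∈ 𝒳 → Y ∈ 𝒳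

/-- A class of objects closed under direct summands. -/
def ClosedUnderDirectSummands (𝒳 : Set 𝒜) : Prop :=
  ∀ X Y : 𝒜, (∃ (s : Y ⟶ X) (r : X ⟶ Y), s ≫ r = 𝟙 Y) → X ∈ 𝒳 → Y ∈ 𝒳

end ExactPaper

/-!
An epimorphic `𝒳`-precover of `A` is admissible, because an admissible epic from a projective onto
`A` factors through it; so every `A` has a conflation `Y → X → A` with `X ∈ 𝒳` and `Y ∈ 𝒴`.

Salce's lemma turns such conflations into preenvelopes: given conflations `A → I → C` with `I`
injective and `Y → X → C` as above, the pullback `D` of `I` and `X` over `C` sits in conflations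
`A → D → X` and `Y → D → I`. The second puts `D` in `𝒴`, so the first is a special preenvelope.

Let `Y₁ → Y₂ → Y₃` be a conflation with `Y₁, Y₂ ∈ 𝒴`. An extension of `X ∈ 𝒳` by `Y₃` is the pushout
of a conflation `K → T → X` with `T ∈ 𝒳` along some `K → Y₃`. Then `K ∈ 𝒳`, so `K → Y₃` lifts to
`Y₂` and this lift extends to `T`, which splits the extension. Hence `Y₃ ∈ 𝒴`.
-/

namespace ExactPaper

section ShortExact

variable {𝒜 : Type u} [Category.{v} 𝒜] [Abelian 𝒜] {S T : ShortComplex 𝒜}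

lemma shortExact_of_isPullback (hS : S.ShortExact) {P M : 𝒜} {fst : P ⟶ S.X₂} {snd : P ⟶ M}
    {m : M ⟶ S.X₃} (sq : IsPullback fst snd S.g m) :
    (ShortComplex.mk (sq.lift S.f 0 (by simp)) snd (by simp)).ShortExact := by
  have := hS.mono_f
  have := hS.epi_g
  have hmono : Mono (sq.lift S.f 0 (by simp)) := mono_of_mono_fac (sq.lift_fst _ _ _)
  have hepi : Epi snd :=
    MorphismProperty.of_isPullback (P := .epimorphisms 𝒜) sq (.infer_property _)
  refine .mk' (ShortComplex.exact_of_f_is_kernel _ (KernelFork.IsLimit.ofι' _ _ fun k hk => ?_))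
    hmono hepi
  have hfst : (k ≫ fst) ≫ S.g = 0 := by rw [assoc, sq.w, reassoc_of% hk, zero_comp]
  exact ⟨hS.exact.lift _ hfst, sq.hom_ext (by simp) (by simpa using hk.symm)⟩

lemma shortExact_of_isPushout (hS : S.ShortExact) {P N : 𝒜} {m : S.X₁ ⟶ N} {inl : S.X₂ ⟶ P}
    {inr : N ⟶ P} (sq : IsPushout S.f m inl inr) :
    (ShortComplex.mk inr (sq.desc S.g 0 (by simp)) (by simp)).ShortExact := by
  have := hS.mono_f
  have := hS.epi_g
  have hmono : Mono inr :=
    MorphismProperty.of_isPushout (P := .monomorphisms 𝒜) sq.flip (.infer_property _)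
  have hepi : Epi (sq.desc S.g 0 (by simp)) := epi_of_epi_fac (sq.inl_desc _ _ _)
  refine .mk' (ShortComplex.exact_of_g_is_cokernel _
    (CokernelCofork.IsColimit.ofπ' _ _ fun k hk => ?_)) hmono hepi
  have hinl : S.f ≫ inl ≫ k = 0 := by rw [sq.w_assoc, hk, comp_zero]
  exact ⟨hS.exact.desc _ hinl, sq.hom_ext (by simp) (by simpa using hk.symm)⟩

lemma shortExact_comp_of_isPushout (hS : S.ShortExact) {Z Q : 𝒜} {j : S.X₂ ⟶ Z} [Mono j]
    {inl : Z ⟶ Q} {inr : S.X₃ ⟶ Q} (sq : IsPushout j S.g inl inr) :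
    (ShortComplex.mk (S.f ≫ j) inl (by simp [sq.w])).ShortExact := by
  have := hS.mono_f
  have := hS.epi_g
  have hepi : Epi inl :=
    MorphismProperty.of_isPushout (P := .epimorphisms 𝒜) sq (.infer_property _)
  refine .mk' (ShortComplex.exact_of_g_is_cokernel _
    (CokernelCofork.IsColimit.ofπ' _ _ fun k hk => ?_)) (mono_comp _ _) hepi
  have hk' : S.f ≫ j ≫ k = 0 := by rw [← assoc, hk]
  exact ⟨sq.desc k (hS.exact.desc _ hk') (by simp), sq.inl_desc _ _ _⟩

lemma isPushout_of_isIso_τ₃ (hS : S.ShortExact) (hT : T.ShortExact) (φ : S ⟶ T)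
    [IsIso φ.τ₃] : IsPushout S.f φ.τ₁ φ.τ₂ T.f := by
  have sq := IsPushout.of_hasPushout S.f φ.τ₁
  let ψ : ShortComplex.mk (pushout.inr S.f φ.τ₁) (sq.desc S.g 0 (by simp)) (by simp) ⟶ T :=
    { τ₁ := 𝟙 _
      τ₂ := sq.desc φ.τ₂ T.f φ.comm₁₂.symm
      τ₃ := φ.τ₃
      comm₁₂ := by simp
      comm₂₃ := sq.hom_ext (by simp [φ.comm₂₃]) (by simp) }
  have : IsIso ψ.τ₂ := ShortComplex.isIso₂_of_shortExact_of_isIso₁₃' ψ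
    (shortExact_of_isPushout hS sq) hT inferInstance inferInstance
  exact sq.of_iso (Iso.refl _) (Iso.refl _) (Iso.refl _) (asIso ψ.τ₂)
    (by simp) (by simp) (by simp [ψ]) (by simp [ψ])

end ShortExact

namespace ExactStructure

variable {𝒜 : Type u} [Category.{v} 𝒜] [Abelian 𝒜] (E : ExactStructure 𝒜)
  {S T : ShortComplex 𝒜} {𝒳 𝒴 : Set 𝒜}

lemma conflation_of_admEpi (hS : S.ShortExact) (hg : AdmEpi E.conflation S.g) :
    E.conflation S := by
  obtain ⟨K, i, w, hi⟩ := hg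
  let e : K ≅ S.X₁ :=
    IsLimit.conePointUniqueUpToIso (E.shortExact_of_conflation _ hi).fIsKernel hS.fIsKernel
  have he : e.hom ≫ S.f = i := IsLimit.conePointUniqueUpToIso_hom_comp
    (E.shortExact_of_conflation _ hi).fIsKernel hS.fIsKernel WalkingParallelPair.zero
  refine E.conflation_of_iso _ _ ?_ hi
  exact ShortComplex.isoMk e (Iso.refl _) (Iso.refl _) (by simp [he]) (by simp)

lemma conflation_of_admMono (hS : S.ShortExact) (hf : AdmMono E.conflation S.f) :
    E.conflation S := by
  obtain ⟨C, p, w, hp⟩ := hf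
  let e : C ≅ S.X₃ := IsColimit.coconePointUniqueUpToIso
    (E.shortExact_of_conflation _ hp).gIsCokernel hS.gIsCokernel
  have he : p ≫ e.hom = S.g := IsColimit.comp_coconePointUniqueUpToIso_hom
    (E.shortExact_of_conflation _ hp).gIsCokernel hS.gIsCokernel WalkingParallelPair.one
  refine E.conflation_of_iso _ _ ?_ hp
  exact ShortComplex.isoMk (Iso.refl _) (Iso.refl _) e (by simp) (by simp [he])

lemma admEpi_of_isPullback {P M N M' : 𝒜} {fst : P ⟶ M} {snd : P ⟶ M'} {p : M ⟶ N}
    {m : M' ⟶ N} (sq : IsPullback fst snd p m) (hp : AdmEpi E.conflation p) :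
    AdmEpi E.conflation snd := by
  obtain ⟨K, i, w, hi⟩ := E.admEpi_pullback p m hp
  refine ⟨K, i ≫ sq.isoPullback.inv, by simp [w], E.conflation_of_iso _ _ ?_ hi⟩
  exact ShortComplex.isoMk (Iso.refl _) sq.isoPullback.symm (Iso.refl _) (by simp) (by simp)

lemma admMono_of_isPushout {L M N P : 𝒜} {i : L ⟶ M} {m : L ⟶ N} {inl : M ⟶ P} {inr : N ⟶ P}
    (sq : IsPushout i m inl inr) (hi : AdmMono E.conflation i) : AdmMono E.conflation inr := by
  obtain ⟨C, p, w, hp⟩ := E.admMono_pushout i m hi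
  refine ⟨C, sq.isoPushout.hom ≫ p, by simp [w], E.conflation_of_iso _ _ ?_ hp⟩
  exact ShortComplex.isoMk (Iso.refl _) sq.isoPushout.symm (Iso.refl _) (by simp) (by simp)

lemma conflation_of_isPullback (hS : E.conflation S) {P M : 𝒜} {fst : P ⟶ S.X₂} {snd : P ⟶ M}
    {m : M ⟶ S.X₃} (sq : IsPullback fst snd S.g m) :
    E.conflation (ShortComplex.mk (sq.lift S.f 0 (by simp)) snd (by simp)) :=
  E.conflation_of_admEpi (shortExact_of_isPullback (E.shortExact_of_conflation S hS) sq)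
    (E.admEpi_of_isPullback sq ⟨_, _, _, hS⟩)

lemma conflation_of_isPushout (hS : E.conflation S) {P N : 𝒜} {m : S.X₁ ⟶ N} {inl : S.X₂ ⟶ P}
    {inr : N ⟶ P} (sq : IsPushout S.f m inl inr) :
    E.conflation (ShortComplex.mk inr (sq.desc S.g 0 (by simp)) (by simp)) :=
  E.conflation_of_admMono (shortExact_of_isPushout (E.shortExact_of_conflation S hS) sq)
    (E.admMono_of_isPushout sq ⟨_, _, _, hS⟩)

lemma conflation_of_isIso_τ₃ (hS : E.conflation S) (hT : T.ShortExact) (φ : S ⟶ T) [IsIso φ.τ₃] :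
    E.conflation T :=
  E.conflation_of_admMono hT (E.admMono_of_isPushout
    (isPushout_of_isIso_τ₃ (E.shortExact_of_conflation S hS) hT φ) ⟨_, _, _, hS⟩)

lemma conflation_kernel_of_admEpi_comp {P X A : 𝒜} (h : P ⟶ X) (p : X ⟶ A) [Epi p]
    (hp : AdmEpi E.conflation (h ≫ p)) :
    E.conflation (ShortComplex.mk (kernel.ι p) p (kernel.condition p)) := by
  obtain ⟨K, i, w, hi⟩ := hp
  let φ : ShortComplex.mk i (h ≫ p) w ⟶ ShortComplex.mk (kernel.ι p) p (kernel.condition p) :=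
    { τ₁ := kernel.lift p (i ≫ h) (by simpa using w)
      τ₂ := h
      τ₃ := 𝟙 A }
  have : IsIso φ.τ₃ := inferInstanceAs (IsIso (𝟙 A))
  exact E.conflation_of_isIso_τ₃ hi
    (.mk' (ShortComplex.exact_kernel p) inferInstance inferInstance) φ

lemma ext1Zero_iff_exists_section {M N : 𝒜} :
    E.Ext1Zero M N ↔ ∀ (Z : 𝒜) (i : N ⟶ Z) (p : Z ⟶ M) (w : i ≫ p = 0),
      E.conflation (ShortComplex.mk i p w) → ∃ s : M ⟶ Z, s ≫ p = 𝟙 M := by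
  refine forall₄_congr fun Z i p w => forall_congr' fun hip => ?_
  have hex := E.shortExact_of_conflation _ hip
  constructor
  · rintro ⟨r, hr⟩
    let σ := ShortComplex.Splitting.ofExactOfRetraction _ hex.exact r hr hex.epi_g
    exact ⟨σ.s, σ.s_g⟩
  · rintro ⟨s, hs⟩
    let σ := ShortComplex.Splitting.ofExactOfSection _ hex.exact s hs hex.mono_f
    exact ⟨σ.r, σ.f_r⟩

variable {E}

lemma Ext1Zero.exists_extension {N : 𝒜} (hS : E.conflation S) (h : E.Ext1Zero S.X₃ N)
    (m : S.X₁ ⟶ N) : ∃ e : S.X₂ ⟶ N, S.f ≫ e = m := by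
  have sq := IsPushout.of_hasPushout S.f m
  obtain ⟨r, hr⟩ := h _ _ _ _ (E.conflation_of_isPushout hS sq)
  exact ⟨pushout.inl S.f m ≫ r, by rw [sq.w_assoc, hr, comp_id]⟩

lemma Ext1Zero.exists_lift {M : 𝒜} (hS : E.conflation S) (h : E.Ext1Zero M S.X₁)
    (m : M ⟶ S.X₃) : ∃ l : M ⟶ S.X₂, l ≫ S.g = m := by
  have sq := IsPullback.of_hasPullback S.g m
  obtain ⟨s, hs⟩ :=
    E.ext1Zero_iff_exists_section.1 h _ _ _ _ (E.conflation_of_isPullback hS sq)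
  exact ⟨s ≫ pullback.fst S.g m, by rw [assoc, sq.w, reassoc_of% hs]⟩

variable (E)

lemma mem_rightPerp_of_eInjective {I : 𝒜} (hI : E.EInjective I) : I ∈ E.rightPerp 𝒳 :=
  fun _ _ _ _ _ _ hZ => hI _ hZ (𝟙 I)

lemma closedUnderExtensions_rightPerp : E.ClosedUnderExtensions (E.rightPerp 𝒳) := by
  intro S hS h₁ h₃ X hX
  refine E.ext1Zero_iff_exists_section.2 fun Z j p w hj => ?_
  have : Mono j := (E.shortExact_of_conflation _ hj).mono_f
  have sq := IsPushout.of_hasPushout j S.g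
  obtain ⟨s, hs⟩ := E.ext1Zero_iff_exists_section.1 (h₃ X hX) _ _ _ _
    (E.conflation_of_isPushout hj sq)
  have hinl : E.conflation (ShortComplex.mk (S.f ≫ j) (pushout.inl j S.g) (by simp [sq.w])) :=
    E.conflation_of_admMono (shortExact_comp_of_isPushout (E.shortExact_of_conflation S hS) sq)
      (E.admMono_comp _ _ ⟨_, _, _, hS⟩ ⟨_, _, _, hj⟩)
  obtain ⟨t, ht⟩ := (h₁ X hX).exists_lift hinl s
  have hp : pushout.inl j S.g ≫ sq.desc p 0 (by simp [w]) = p := sq.inl_desc _ _ _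
  exact ⟨t, by rw [← hp, reassoc_of% ht, hs]⟩

lemma X₃_mem_rightPerp
    (hgen : ∀ A : 𝒜, ∃ T ∈ 𝒳, ∃ q : T ⟶ A, AdmEpi E.conflation q)
    (hker : ∀ S : ShortComplex 𝒜, E.conflation S → S.X₂ ∈ 𝒳 → S.X₃ ∈ 𝒳 → S.X₁ ∈ 𝒳)
    (hS : E.conflation S) (h₁ : S.X₁ ∈ E.rightPerp 𝒳) (h₂ : S.X₂ ∈ E.rightPerp 𝒳) :
    S.X₃ ∈ E.rightPerp 𝒳 := by
  intro X hX Z j p w hj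
  obtain ⟨T, hT, q, hq⟩ := hgen Z
  obtain ⟨K, i, wi, hi⟩ := E.admEpi_comp q p hq ⟨_, _, _, hj⟩
  have hjex := E.shortExact_of_conflation _ hj
  have := hjex.mono_f
  have hiq : (i ≫ q) ≫ p = 0 := by rw [assoc, wi]
  let φ : ShortComplex.mk i (q ≫ p) wi ⟶ ShortComplex.mk j p w :=
    { τ₁ := hjex.exact.lift (i ≫ q) hiq
      τ₂ := q
      τ₃ := 𝟙 X
      comm₁₂ := hjex.exact.lift_f _ _ }
  have : IsIso φ.τ₃ := inferInstanceAs (IsIso (𝟙 X))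
  have sq : IsPushout i φ.τ₁ q j :=
    isPushout_of_isIso_τ₃ (E.shortExact_of_conflation _ hi) hjex φ
  obtain ⟨l, hl⟩ := (h₁ K (hker _ hi hT hX)).exists_lift hS φ.τ₁
  obtain ⟨e, he⟩ := (h₂ X hX).exists_extension hi l
  have hφ : i ≫ e ≫ S.g = φ.τ₁ ≫ 𝟙 S.X₃ := by rw [reassoc_of% he, hl, comp_id]
  exact ⟨sq.desc (e ≫ S.g) (𝟙 _) hφ, sq.inr_desc _ _ _⟩

/-- Every object `A` has a special `𝒳`-precover relative to `𝒴`: a conflation `Y → X → A` with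
`X ∈ 𝒳` and `Y ∈ 𝒴`. -/
def HasSpecialPrecovers (𝒳 𝒴 : Set 𝒜) : Prop :=
  ∀ A : 𝒜, ∃ (Y X : 𝒜) (i : Y ⟶ X) (p : X ⟶ A) (w : i ≫ p = 0),
    E.conflation (ShortComplex.mk i p w) ∧ X ∈ 𝒳 ∧ Y ∈ 𝒴

/-- Every object `A` has a special `𝒴`-preenvelope relative to `𝒳`: a conflation `A → Y → X` with
`X ∈ 𝒳` and `Y ∈ 𝒴`. -/
def HasSpecialPreenvelopes (𝒳 𝒴 : Set 𝒜) : Prop :=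
  ∀ A : 𝒜, ∃ (Y X : 𝒜) (i : A ⟶ Y) (p : Y ⟶ X) (w : i ≫ p = 0),
    E.conflation (ShortComplex.mk i p w) ∧ X ∈ 𝒳 ∧ Y ∈ 𝒴

variable {E}

lemma hasSpecialPrecovers_of_isPrecover (hproj : E.EnoughProjectives)
    (hXproj : ∀ P : 𝒜, E.EProjective P → P ∈ 𝒳)
    (hcov : ∀ A : 𝒜, ∃ (X : 𝒜) (p : X ⟶ A), Epi p ∧ IsPrecover 𝒳 p ∧ kernel p ∈ 𝒴) :
    E.HasSpecialPrecovers 𝒳 𝒴 := by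
  intro A
  obtain ⟨X, p, _, ⟨hX, hfactor⟩, hker⟩ := hcov A
  obtain ⟨K, P, i, q, w, hq, hP⟩ := hproj A
  obtain ⟨h, rfl⟩ := hfactor P (hXproj P hP) q
  exact ⟨_, X, _, p, _, E.conflation_kernel_of_admEpi_comp h p ⟨_, _, _, hq⟩, hX, hker⟩

lemma HasSpecialPrecovers.leftPerp_subset (hcov : E.HasSpecialPrecovers 𝒳 𝒴)
    (hXsum : ClosedUnderDirectSummands 𝒳) : E.leftPerp 𝒴 ⊆ 𝒳 := by
  intro M hM
  obtain ⟨Y, X, i, p, w, hp, hX, hY⟩ := hcov M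
  obtain ⟨s, hs⟩ := E.ext1Zero_iff_exists_section.1 (hM Y hY) _ _ _ _ hp
  exact hXsum X M ⟨s, p, hs⟩ hX

lemma HasSpecialPrecovers.hasSpecialPreenvelopes (hcov : E.HasSpecialPrecovers 𝒳 𝒴)
    (hinj : E.EnoughInjectives) (hYinj : ∀ I : 𝒜, E.EInjective I → I ∈ 𝒴)
    (hYext : E.ClosedUnderExtensions 𝒴) : E.HasSpecialPreenvelopes 𝒳 𝒴 := by
  intro A
  obtain ⟨I, C, i, q, wi, hi, hI⟩ := hinj A
  obtain ⟨Y, X, k, p, wk, hk, hX, hY⟩ := hcov C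
  have sq := IsPullback.of_hasPullback q p
  have hD : pullback q p ∈ 𝒴 :=
    hYext _ (E.conflation_of_isPullback hk sq.flip) hY (hYinj I hI)
  exact ⟨_, X, _, _, _, E.conflation_of_isPullback hi sq, hX, hD⟩

lemma HasSpecialPreenvelopes.exists_isPreenvelope (henv : E.HasSpecialPreenvelopes 𝒳 𝒴)
    (hXsum : ClosedUnderDirectSummands 𝒳) (hXY : 𝒳 ⊆ E.leftPerp 𝒴) (A : 𝒜) :
    ∃ (Y : 𝒜) (j : A ⟶ Y), Mono j ∧ IsPreenvelope 𝒴 j ∧ cokernel j ∈ 𝒳 := by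
  obtain ⟨Y, X, j, p, w, hj, hX, hY⟩ := henv A
  have hjex := E.shortExact_of_conflation _ hj
  let e : cokernel j ≅ X :=
    IsColimit.coconePointUniqueUpToIso (cokernelIsCokernel j) hjex.gIsCokernel
  exact ⟨Y, j, hjex.mono_f, ⟨hY, fun Y' hY' m => (hXY hX Y' hY').exists_extension hj m⟩,
    hXsum X _ ⟨e.hom, e.inv, e.hom_inv_id⟩ hX⟩

end ExactStructure

end ExactPaper

open ExactPaper in
theorem coresolving_of_resolving_general
    {𝒜 : Type u} [Category.{v} 𝒜] [Abelian 𝒜] (E : ExactStructure 𝒜)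
    (hinj : E.EnoughInjectives) (𝒳 : Set 𝒜) (hXsum : ClosedUnderDirectSummands 𝒳)
    (hker : ∀ S : ShortComplex 𝒜, E.conflation S → S.X₂ ∈ 𝒳 → S.X₃ ∈ 𝒳 → S.X₁ ∈ 𝒳)
    (hcov : E.HasSpecialPrecovers 𝒳 (E.rightPerp 𝒳)) :
    E.Coresolving (E.rightPerp 𝒳) ∧ 𝒳 = E.leftPerp (E.rightPerp 𝒳) ∧
      ∀ A : 𝒜, ∃ (Y : 𝒜) (j : A ⟶ Y),
        Mono j ∧ IsPreenvelope (E.rightPerp 𝒳) j ∧ cokernel j ∈ 𝒳 := by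
  have hXY : 𝒳 ⊆ E.leftPerp (E.rightPerp 𝒳) := fun X hX Y hY => hY X hX
  have hYinj (I : 𝒜) : E.EInjective I → I ∈ E.rightPerp 𝒳 := E.mem_rightPerp_of_eInjective
  have hgen (A : 𝒜) : ∃ T ∈ 𝒳, ∃ q : T ⟶ A, AdmEpi E.conflation q :=
    have ⟨_, T, _, q, _, hq, hT, _⟩ := hcov A
    ⟨T, hT, q, _, _, _, hq⟩
  have henv := hcov.hasSpecialPreenvelopes hinj hYinj E.closedUnderExtensions_rightPerp
  exact ⟨⟨hYinj, E.closedUnderExtensions_rightPerp,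
      fun S => E.X₃_mem_rightPerp hgen hker⟩,
    hXY.antisymm (hcov.leftPerp_subset hXsum), henv.exists_isPreenvelope hXsum hXY⟩

open ExactPaper CategoryTheory Limits in
/-- **Theorem 3.4, (1) ⇒ (2)**: if `𝒳` is `ℰ`-resolving, `𝒴 = 𝒳^⊥`, and every object
admits an epimorphic `𝒳`-precover with kernel in `𝒴`, then `𝒴` is `ℰ`-coresolving,
`𝒳 = ^⊥𝒴`, and every object admits a monomorphic `𝒴`-preenvelope with cokernel in `𝒳`. -/
theorem coresolving_of_resolving
    {𝒜 : Type u} [Category.{v} 𝒜] [Abelian 𝒜]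
    (E : ExactStructure 𝒜)
    (hproj : E.EnoughProjectives) (hinj : E.EnoughInjectives)
    (𝒳 𝒴 : Set 𝒜)
    (hXiso : ClosedUnderIsos 𝒳) (hXsum : ClosedUnderDirectSummands 𝒳)
    (hYiso : ClosedUnderIsos 𝒴) (hYsum : ClosedUnderDirectSummands 𝒴)
    (hres : E.Resolving 𝒳) (hperp : 𝒴 = E.rightPerp 𝒳)
    (hcov : ∀ A : 𝒜, ∃ (X : 𝒜) (p : X ⟶ A),
      Epi p ∧ IsPrecover 𝒳 p ∧ kernel p ∈ 𝒴) :
    E.Coresolving 𝒴 ∧ 𝒳 = E.leftPerp 𝒴 ∧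
      ∀ A : 𝒜, ∃ (Y : 𝒜) (j : A ⟶ Y), Mono j ∧ IsPreenvelope 𝒴 j ∧ cokernel j ∈ 𝒳 := by
  subst hperp
  exact coresolving_of_resolving_general E hinj 𝒳 hXsum hres.2.2
    (ExactStructure.hasSpecialPrecovers_of_isPrecover hproj hres.1 hcov)
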